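/- Let α = 3, β = 4 (so b = 7) and T = 1/3. For every integer N ≥ 7 there exist real numbers γ_1, …, γ_8, not all zero, such that the N×N matrix 𝓛 = γ_1·I + γ_2·Λ_N + γ_3·B_N + γ_4·Λ_N² + γ_5·(Λ_N B_N + B_N Λ_N) + γ_6·(B_N Λ_N² + Λ_N² B_N) + γ_7·Λ_N B_N Λ_N + γ_8·[(Λ_N³ B_N + B_N Λ_N³) − (Λ_N B_N Λ_N² + Λ_N² B_N Λ_N)] is not a scalar multiple of the identity and commutes with the N×N matrix M with entries M_{jk} = ∫_{−1}^{1/3} p̃_j(x) p̃_k(x) (1−x)³(1+x)⁴/(x−7)² dx, where B_N is the N×N matrix with entries (B_N)_{jk} = ∫_{−1}^{1} (x−7)² p̃_j(x) p̃_k(x) (1−x)³(1+x)⁴/(x−7)² dx and Λ_N is the diagonal N×N matrix with diagonal entries (n−1)(n+7) for n = 1, …, N. -/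

import Mathlib

open Real MeasureTheory

/-- The generalized binomial coefficient `C(r, k) = r (r-1) ⋯ (r-k+1) / k!`. -/
noncomputable def genChoose (r : ℝ) (k : ℕ) : ℝ :=
  (∏ i ∈ Finset.range k, (r - i)) / (Nat.factorial k : ℝ)

/-- The classical Jacobi polynomials, via the explicit formula
`p_n^{(α,β)}(x) = Σ_{s=0}^n C(n+α, n-s) C(n+β, s) ((x-1)/2)^s ((x+1)/2)^{n-s}`,
which are orthogonal on `(-1,1)` w.r.t. `(1-x)^α (1+x)^β` and normalized by
`p_n^{(α,β)}(1) = C(n+α, n)`. -/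
noncomputable def jacobiP (α β : ℝ) (n : ℕ) (x : ℝ) : ℝ :=
  ∑ s ∈ Finset.range (n + 1),
    genChoose ((n : ℝ) + α) (n - s) * genChoose ((n : ℝ) + β) s *
      ((x - 1) / 2) ^ s * ((x + 1) / 2) ^ (n - s)

/-- `b = (β+α)/(β-α)`. -/
noncomputable def bJac (α β : ℝ) : ℝ := (β + α) / (β - α)

/-- The exceptional Jacobi polynomials (missing degree `0`):
`p̂_n(x) = (b p_{n-1} - p_{n-2})/(2n+β+α-2) - p_{n-1} (x-b)/2` for `n ≥ 1`,
with the conventions `p̂_0 = 0` (and `p_{-1} = 0`, handled by the guard `n = 1`). -/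
noncomputable def excJacobi (α β : ℝ) (n : ℕ) (x : ℝ) : ℝ :=
  if n = 0 then 0
  else (bJac α β * jacobiP α β (n - 1) x - (if n = 1 then 0 else jacobiP α β (n - 2) x)) /
        (2 * (n : ℝ) + β + α - 2)
      - jacobiP α β (n - 1) x * (x - bJac α β) / 2

/-- `‖p̂_n‖²` for `α = 3`, `β = 4` (so `b = 7`). -/
noncomputable def normSqJ (n : ℕ) : ℝ :=
  ∫ x in (-1 : ℝ)..1, (excJacobi 3 4 n x) ^ 2 * (1 - x) ^ 3 * (1 + x) ^ 4 / (x - 7) ^ 2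

/-- The orthonormal exceptional Jacobi polynomials `p̃_n = p̂_n / ‖p̂_n‖` for `α = 3`, `β = 4`. -/
noncomputable def pTil (n : ℕ) (x : ℝ) : ℝ := excJacobi 3 4 n x / Real.sqrt (normSqJ n)

/-- `M_{jk} = ∫_{-1}^{1/3} p̃_j p̃_k (1-x)³(1+x)⁴/(x-7)² dx`, `1 ≤ j,k ≤ N`. -/
noncomputable def MMat (N : ℕ) : Matrix (Fin N) (Fin N) ℝ := fun j k =>
  ∫ x in (-1 : ℝ)..(1/3 : ℝ),
    pTil ((j : ℕ) + 1) x * pTil ((k : ℕ) + 1) x * (1 - x) ^ 3 * (1 + x) ^ 4 / (x - 7) ^ 2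

/-- `(B_N)_{jk} = ∫_{-1}^{1} (x-7)² p̃_j p̃_k (1-x)³(1+x)⁴/(x-7)² dx`. -/
noncomputable def BMat (N : ℕ) : Matrix (Fin N) (Fin N) ℝ := fun j k =>
  ∫ x in (-1 : ℝ)..1,
    (x - 7) ^ 2 * pTil ((j : ℕ) + 1) x * pTil ((k : ℕ) + 1) x *
      (1 - x) ^ 3 * (1 + x) ^ 4 / (x - 7) ^ 2

/-- `Λ_N` is diagonal with entries `(n-1)(n+7)` for `n = 1, …, N`. -/
noncomputable def LamMat (N : ℕ) : Matrix (Fin N) (Fin N) ℝ :=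
  Matrix.diagonal fun i => (((i : ℕ) + 1 : ℝ) - 1) * (((i : ℕ) + 1 : ℝ) + 7)

section

open Polynomial

theorem genChoose_natCast (m k : ℕ) : genChoose (m : ℝ) k = (m.choose k : ℝ) := by
  rw [genChoose, ← descPochhammer_eval_eq_prod_range, descPochhammer_eval_eq_descFactorial,
    Nat.descFactorial_eq_factorial_mul_choose]
  have : (k.factorial : ℝ) ≠ 0 := by positivity
  push_cast
  field_simp

/-- Coefficients of `p_n^{(3,4)}` in the homogeneous basis `((x-1)/2)^s ((x+1)/2)^(n-s)`. -/
def jacCoeff (n s : ℕ) : ℕ := (n + 3).choose (s + 3) * (n + 4).choose s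

theorem jacCoeff_eq_zero {n s : ℕ} (h : n < s) : jacCoeff n s = 0 := by
  rw [jacCoeff, Nat.choose_eq_zero_of_lt (by omega), zero_mul]

/-- The dehomogenized polynomial `∑ c_{n,s} t^s` of `p_n^{(3,4)}`. -/
noncomputable def jacHom (n : ℕ) : ℝ[X] :=
  ∑ s ∈ Finset.range (n + 1), C (jacCoeff n s : ℝ) * X ^ s

theorem coeff_jacHom (n s : ℕ) : (jacHom n).coeff s = jacCoeff n s := by
  simp only [jacHom, finsetSum_coeff, coeff_C_mul, coeff_X_pow]
  by_cases h : s ≤ n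
  · rw [Finset.sum_eq_single s] <;> grind
  · rw [jacCoeff_eq_zero (by omega), Finset.sum_eq_zero] <;> grind

theorem cast_choose_succ_mul (m k : ℕ) :
    ((m : ℝ) + 1) * (m.choose k : ℝ) = ((m : ℝ) + 1 - k) * ((m + 1).choose k : ℝ) := by
  rcases le_or_gt k (m + 1) with h | h
  · have := Nat.choose_mul_succ_eq m k
    have h2 : ((m + 1 - k : ℕ) : ℝ) = (m : ℝ) + 1 - k := by push_cast [Nat.cast_sub h]; ring
    rw [← h2]
    exact_mod_cast (by linarith : (m + 1) * m.choose k = (m + 1 - k) * (m + 1).choose k)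
  · rw [Nat.choose_eq_zero_of_lt h, Nat.choose_eq_zero_of_lt (by omega)]; simp

theorem jacCoeff_pred (n s : ℕ) :
    ((n : ℝ) + 4) * (n + 5) * jacCoeff n s
      = ((n : ℝ) + 1 - s) * (n + 5 - s) * jacCoeff (n + 1) s := by
  have h1 := cast_choose_succ_mul (n + 3) (s + 3)
  have h2 := cast_choose_succ_mul (n + 4) s
  simp only [jacCoeff]
  push_cast at h1 h2 ⊢
  rw [show n + 1 + 3 = n + 3 + 1 by ring, show n + 1 + 4 = n + 4 + 1 by ring]
  linear_combination ((n : ℝ) + 5) * ((n + 4).choose s : ℝ) * h1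
    + ((n : ℝ) + 1 - s) * ((n + 3 + 1).choose (s + 3) : ℝ) * h2

theorem jacCoeff_pred_pred (n s : ℕ) :
    ((n : ℝ) + 4) * (n + 5) * jacCoeff n s
      = ((s : ℝ) + 4) * (s + 1) * jacCoeff (n + 1) (s + 1) := by
  have h1 := Nat.add_one_mul_choose_eq (n + 3) (s + 3)
  have h2 := Nat.add_one_mul_choose_eq (n + 4) s
  have h1' : (((n + 3 + 1 : ℕ) : ℝ)) * ((n + 3).choose (s + 3) : ℝ)
    = ((n + 3 + 1).choose (s + 3 + 1) : ℝ) * ((s + 3 + 1 : ℕ) : ℝ) := by exact_mod_cast h1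
  have h2' : (((n + 4 + 1 : ℕ) : ℝ)) * ((n + 4).choose s : ℝ)
    = ((n + 4 + 1).choose (s + 1) : ℝ) * ((s + 1 : ℕ) : ℝ) := by exact_mod_cast h2
  simp only [jacCoeff]
  push_cast at h1' h2' ⊢
  rw [show n + 1 + 3 = n + 3 + 1 by ring, show n + 1 + 4 = n + 4 + 1 by ring,
    show s + 1 + 3 = s + 3 + 1 by ring]
  linear_combination ((n : ℝ) + 5) * ((n + 4).choose s : ℝ) * h1'
    + ((s : ℝ) + 4) * ((n + 3 + 1).choose (s + 3 + 1) : ℝ) * h2'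

theorem jacHom_lowering (n : ℕ) :
    C (((n : ℝ) + 1) * (n + 5)) * jacHom (n + 1)
        - C (2 * (n : ℝ) + 9) * (X * derivative (jacHom (n + 1)))
      = C (((n : ℝ) + 4) * (n + 5)) * (jacHom n - X * jacHom n) := by
  ext s
  rcases s with _ | s
  · have h := jacCoeff_pred n 0
    simp only [coeff_sub, coeff_C_mul, coeff_X_mul_zero, coeff_jacHom]
    push_cast at h
    linear_combination -h
  · have h1 := jacCoeff_pred n (s + 1)
    have h2 := jacCoeff_pred_pred n s
    simp only [coeff_sub, coeff_C_mul, coeff_X_mul, coeff_derivative, coeff_jacHom]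
    push_cast at h1
    linear_combination -h1 + h2

theorem jacHom_raising (n : ℕ) :
    C (2 * (n : ℝ) + 9) * (C (n : ℝ) * (X * jacHom n) + X * derivative (jacHom n)
        - X * (X * derivative (jacHom n))) + C ((n : ℝ) + 8) * (C ((n : ℝ) + 4) * jacHom n
        + C ((n : ℝ) + 5) * (X * jacHom n))
      = C (((n : ℝ) + 1) * (n + 8)) * jacHom (n + 1) := by
  have hne : ((n : ℝ) + 4) * (n + 5) ≠ 0 := by positivity
  ext s
  refine mul_left_cancel₀ hne ?_
  rcases s with _ | s
  · have h := jacCoeff_pred n 0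
    simp only [coeff_sub, coeff_add, coeff_C_mul, coeff_X_mul_zero, coeff_jacHom]
    push_cast at h
    linear_combination ((n : ℝ) + 8) * (n + 4) * h
  · have h1 := jacCoeff_pred n (s + 1)
    have h2 := jacCoeff_pred_pred n s
    rcases s with _ | s
    · simp only [coeff_sub, coeff_add, coeff_C_mul, coeff_X_mul, coeff_X_mul_zero,
        coeff_derivative, coeff_jacHom]
      push_cast at h1 h2 ⊢
      simp only [zero_add] at *
      linear_combination (2 * (n : ℝ) + 9 + (n + 8) * (n + 4)) * h1
        + ((2 * (n : ℝ) + 9) * n + (n + 8) * (n + 5)) * h2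
    · simp only [coeff_sub, coeff_add, coeff_C_mul, coeff_X_mul, coeff_derivative, coeff_jacHom]
      push_cast at h1 h2 ⊢
      linear_combination ((2 * (n : ℝ) + 9) * (s + 2) + (n + 8) * (n + 4)) * h1
        + ((2 * (n : ℝ) + 9) * (n - s - 1) + (n + 8) * (n + 5)) * h2

/-- The polynomial underlying `jacobiP 3 4 n`. -/
noncomputable def jacPoly (n : ℕ) : ℝ[X] :=
  ∑ s ∈ Finset.range (n + 1),
    C (jacCoeff n s : ℝ) * (C (1 / 2) * (X - 1)) ^ s * (C (1 / 2) * (X + 1)) ^ (n - s)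

theorem eval_jacPoly (n : ℕ) (x : ℝ) : (jacPoly n).eval x = jacobiP 3 4 n x := by
  simp only [jacPoly, jacobiP, eval_finsetSum]
  refine Finset.sum_congr rfl fun s hs => ?_
  have hs' : s ≤ n := by simpa [Nat.lt_succ_iff] using hs
  have h3 : genChoose ((n : ℝ) + 3) (n - s) = ((n + 3).choose (s + 3) : ℝ) := by
    rw [show ((n : ℝ) + 3) = ((n + 3 : ℕ) : ℝ) by push_cast; ring, genChoose_natCast,
      ← Nat.choose_symm (by omega), show n + 3 - (n - s) = s + 3 by omega]
  have h4 : genChoose ((n : ℝ) + 4) s = ((n + 4).choose s : ℝ) := by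
    rw [show ((n : ℝ) + 4) = ((n + 4 : ℕ) : ℝ) by push_cast; ring, genChoose_natCast]
  rw [h3, h4]
  simp only [eval_mul, eval_pow, eval_C, eval_sub, eval_add, eval_X, eval_one, jacCoeff]
  push_cast
  ring

theorem eval_jacPoly_eq_jacHom (n : ℕ) {x : ℝ} (hx : x + 1 ≠ 0) :
    (jacPoly n).eval x = ((x + 1) / 2) ^ n * (jacHom n).eval ((x - 1) / (x + 1)) := by
  simp only [jacPoly, jacHom, eval_finsetSum, Finset.mul_sum]
  refine Finset.sum_congr rfl fun s hs => ?_
  obtain ⟨k, rfl⟩ : ∃ k, n = s + k := ⟨n - s, by grind⟩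
  simp only [eval_mul, eval_pow, eval_C, eval_sub, eval_add, eval_X, eval_one,
    add_tsub_cancel_left, div_pow, pow_add, mul_pow, one_pow]
  field_simp

theorem eval_derivative_jacPoly (n : ℕ) {x : ℝ} (hx : x + 1 ≠ 0) :
    (x + 1) ^ 2 * (derivative (jacPoly n)).eval x
      = ((x + 1) / 2) ^ n * (n * (x + 1) * (jacHom n).eval ((x - 1) / (x + 1))
        + 2 * (derivative (jacHom n)).eval ((x - 1) / (x + 1))) := by
  have hv : HasDerivAt (fun y : ℝ => ((y + 1) / 2) ^ n)
      (n * ((x + 1) / 2) ^ (n - 1) * (1 / 2)) x :=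
    (((hasDerivAt_id x).add_const 1).div_const 2).pow n
  have ht : HasDerivAt (fun y : ℝ => (y - 1) / (y + 1))
      ((1 * (x + 1) - (x - 1) * 1) / (x + 1) ^ 2) x :=
    ((hasDerivAt_id x).sub_const 1).div ((hasDerivAt_id x).add_const 1) hx
  have hh := hv.mul (((jacHom n).hasDerivAt ((x - 1) / (x + 1))).comp x ht)
  have hJ := (jacPoly n).hasDerivAt x
  have heq : (fun y => (jacPoly n).eval y) =ᶠ[nhds x]
      fun y => ((y + 1) / 2) ^ n * (jacHom n).eval ((y - 1) / (y + 1)) := by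
    have : ∀ᶠ y in nhds x, y + 1 ≠ 0 :=
      (continuous_id.add continuous_const).continuousAt.eventually_ne hx
    filter_upwards [this] with y hy using eval_jacPoly_eq_jacHom n hy
  have := hJ.unique (hh.congr_of_eventuallyEq heq)
  rw [this]
  have hpow : (n : ℝ) * ((x + 1) / 2) ^ (n - 1) * (x + 1) = 2 * n * ((x + 1) / 2) ^ n := by
    rcases n with _ | n
    · simp
    · simp only [Nat.add_sub_cancel, pow_succ]; ring
  simp only [Function.comp]
  field_simp
  linear_combination (x + 1) * (jacHom n).eval ((x - 1) / (x + 1)) * hpow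

theorem polynomial_eq_of_eval_eq_of_gt {p q : ℝ[X]} {a : ℝ}
    (h : ∀ x, a < x → p.eval x = q.eval x) : p = q :=
  eq_of_infinite_eval_eq p q ((Set.Ioi_infinite a).mono fun x hx => h x hx)

theorem jacPoly_lowering (n : ℕ) :
    (2 * (n : ℝ[X]) + 9) * ((1 - X ^ 2) * derivative (jacPoly (n + 1)))
      = ((n : ℝ[X]) + 1) * (-1 - (2 * (n : ℝ[X]) + 9) * X) * jacPoly (n + 1)
        + 2 * ((n : ℝ[X]) + 4) * ((n : ℝ[X]) + 5) * jacPoly n := by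
  refine polynomial_eq_of_eval_eq_of_gt (a := -1) fun x hx => ?_
  have hx1 : x + 1 ≠ 0 := by linarith
  have hD := eval_derivative_jacPoly (n + 1) hx1
  have hr := congrArg (eval ((x - 1) / (x + 1))) (jacHom_lowering n)
  simp only [eval_mul, eval_sub, eval_add, eval_C, eval_X, eval_one, eval_pow, eval_natCast,
    eval_ofNat, eval_neg] at hr ⊢
  rw [eval_jacPoly_eq_jacHom n hx1, eval_jacPoly_eq_jacHom (n + 1) hx1]
  generalize eval ((x - 1) / (x + 1)) (jacHom (n + 1)) = h0 at *
  generalize eval ((x - 1) / (x + 1)) (jacHom n) = k0 at *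
  generalize eval ((x - 1) / (x + 1)) (derivative (jacHom (n + 1))) = h1 at *
  generalize eval x (derivative (jacPoly (n + 1))) = d at *
  refine mul_left_cancel₀ (pow_ne_zero 2 hx1) ?_
  push_cast at hD
  field_simp at hr
  linear_combination (2 * (n : ℝ) + 9) * (1 - x ^ 2) * hD
    + (x + 1) ^ 2 * ((x + 1) / 2) ^ n * hr

theorem jacPoly_raising (n : ℕ) :
    (2 * (n : ℝ[X]) + 9) * ((1 - X ^ 2) * derivative (jacPoly n))
      = ((n : ℝ[X]) + 8) * ((2 * (n : ℝ[X]) + 9) * X - 1) * jacPoly n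
        - 2 * ((n : ℝ[X]) + 1) * ((n : ℝ[X]) + 8) * jacPoly (n + 1) := by
  refine polynomial_eq_of_eval_eq_of_gt (a := -1) fun x hx => ?_
  have hx1 : x + 1 ≠ 0 := by linarith
  have hD := eval_derivative_jacPoly n hx1
  have hr := congrArg (eval ((x - 1) / (x + 1))) (jacHom_raising n)
  simp only [eval_mul, eval_sub, eval_add, eval_C, eval_X, eval_one, eval_pow, eval_natCast,
    eval_ofNat] at hr ⊢
  rw [eval_jacPoly_eq_jacHom n hx1, eval_jacPoly_eq_jacHom (n + 1) hx1]
  generalize eval ((x - 1) / (x + 1)) (jacHom (n + 1)) = h0 at *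
  generalize eval ((x - 1) / (x + 1)) (jacHom n) = k0 at *
  generalize eval ((x - 1) / (x + 1)) (derivative (jacHom n)) = h1 at *
  generalize eval x (derivative (jacPoly n)) = d at *
  refine mul_left_cancel₀ (pow_ne_zero 2 hx1) ?_
  field_simp at hr
  linear_combination (2 * (n : ℝ) + 9) * (1 - x ^ 2) * hD
    - (x + 1) * ((x + 1) / 2) ^ n * hr

/-- The polynomial underlying `excJacobi 3 4 (n + 1)`. -/
noncomputable def excPoly : ℕ → ℝ[X]
  | 0 => C (1 / 2) * (9 - X)
  | n + 1 => C (1 / (2 * (n : ℝ) + 9)) * (7 * jacPoly (n + 1) - jacPoly n)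
      - C (1 / 2) * (jacPoly (n + 1) * (X - 7))

theorem eval_excPoly (n : ℕ) (x : ℝ) : (excPoly n).eval x = excJacobi 3 4 (n + 1) x := by
  have hb : bJac 3 4 = 7 := by norm_num [bJac]
  rcases n with _ | n
  · norm_num [excPoly, excJacobi, hb, jacobiP, genChoose]
    ring
  · have : 2 * (n : ℝ) + 9 ≠ 0 := by positivity
    simp only [excPoly, excJacobi, hb, eval_sub, eval_mul, eval_C, eval_X, eval_ofNat,
      eval_jacPoly, Nat.add_eq_zero_iff, Nat.add_eq_right]
    norm_num
    rw [show 2 * ((n : ℝ) + 1 + 1) + 4 + 3 - 2 = 2 * n + 9 by ring,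
      show n + 1 + 1 - 2 = n by omega]
    ring

/-- The exceptional Jacobi operator multiplied by `7 - x`. -/
noncomputable def excOp : ℝ[X] →ₗ[ℝ] ℝ[X] where
  toFun p := (7 - X) * (X ^ 2 - 1) * derivative (derivative p)
    + (1 - 7 * X) * ((X - 9) * derivative p - p)
  map_add' p q := by simp only [derivative_add]; ring
  map_smul' c p := by simp only [smul_eq_C_mul, derivative_C_mul, RingHom.id_apply]; ring

theorem excOp_apply (p : ℝ[X]) : excOp p = (7 - X) * (X ^ 2 - 1) * derivative (derivative p)
    + (1 - 7 * X) * ((X - 9) * derivative p - p) := rfl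

/-- The eigenvalue `n (n + 8)` of the exceptional Jacobi operator. -/
noncomputable def excEig (n : ℕ) : ℝ := n * (n + 8)

theorem excOp_excPoly (n : ℕ) : excOp (excPoly n) = (7 - X) * (C (excEig n) * excPoly n) := by
  rcases n with _ | n
  · simp only [excPoly, excEig, excOp_apply, derivative_C_mul, derivative_sub, derivative_X,
      derivative_ofNat, derivative_one, derivative_neg, CharP.cast_eq_zero, zero_mul, C_0,
      zero_sub, neg_zero, mul_zero]
    ring
  · set c : ℝ[X] := 2 * (n : ℝ[X]) + 9 with hc
    have hcC : c = C (2 * (n : ℝ) + 9) := by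
      simp only [hc, C_add, C_mul, map_natCast, map_ofNat]
    have hc0 : c ≠ 0 := by
      rw [hcC, Ne, C_eq_zero]
      positivity
    have hX : (1 - X ^ 2 : ℝ[X]) ≠ 0 := by
      intro h
      have := congrArg (eval 0) h
      simp at this
    have hY : 2 * c * excPoly (n + 1) = 2 * (7 * jacPoly (n + 1) - jacPoly n)
        - c * (jacPoly (n + 1) * (X - 7)) := by
      have h1 : c * C (1 / (2 * (n : ℝ) + 9)) = 1 := by
        rw [hcC, ← C_mul, mul_one_div_cancel (by positivity), C_1]
      have h2 : (2 : ℝ[X]) * C (1 / 2) = 1 := by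
        rw [show (2 : ℝ[X]) = C 2 from rfl, ← C_mul]; norm_num
      simp only [excPoly]
      linear_combination 2 * (7 * jacPoly (n + 1) - jacPoly n) * h1
        - c * (jacPoly (n + 1) * (X - 7)) * h2
    have hL := jacPoly_lowering n
    have hR := jacPoly_raising n
    have hY1 := congrArg derivative hY
    have hY2 := congrArg derivative hY1
    have hL1 := congrArg derivative hL
    have hR1 := congrArg derivative hR
    simp only [derivative_mul, derivative_sub, derivative_add, derivative_X, hc,
      derivative_ofNat, derivative_natCast, derivative_zero,
      derivative_one, derivative_X_sq, derivative_neg, map_ofNat] at hY hY1 hY2 hL1 hR1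
    have hE : C (excEig (n + 1)) = ((n : ℝ[X]) + 1) * ((n : ℝ[X]) + 9) := by
      rw [excEig, show (((n + 1 : ℕ) : ℝ) * (((n + 1 : ℕ) : ℝ) + 8)) = ((n : ℝ) + 1) * (n + 9) by
        push_cast; ring]
      simp only [C_add, C_mul, map_natCast, map_ofNat, C_1]
    rw [hE, excOp_apply]
    refine mul_left_cancel₀ (mul_ne_zero (mul_ne_zero two_ne_zero (pow_ne_zero 3 hc0)) hX) ?_
    rw [hc]
    generalize excPoly (n + 1) = Y at *
    generalize jacPoly (n + 1) = A at *
    generalize jacPoly n = B at *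
    generalize derivative (derivative Y) = Y2 at *
    generalize derivative Y = Y1 at *
    generalize derivative (derivative A) = A2 at *
    generalize derivative A = A1 at *
    generalize derivative (derivative B) = B2 at *
    generalize derivative B = B1 at *
    generalize (n : ℝ[X]) = k at *
    generalize (X : ℝ[X]) = x at *
    linear_combination (2 * k + 9) * ((2 * k + 9) * (1 - x ^ 2) * (7 - x) * (-(1 - x ^ 2)) * hY2
      + (2 * k + 9) * (1 - x ^ 2) * (1 - 7 * x) * (x - 9) * hY1
      + (2 * k + 9) * (1 - x ^ 2) * (-(1 - 7 * x) - (7 - x) * ((k + 1) * (k + 9))) * hY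
      - (7 - x) * (1 - x ^ 2) * (14 - (2 * k + 9) * (x - 7)) * hL1
      + 2 * (7 - x) * (1 - x ^ 2) * hR1)
      + (-(7 - x) * (14 - (2 * k + 9) * (x - 7)) * (2 * (2 * k + 9) * x
            + (k + 1) * (-1 - (2 * k + 9) * x))
          + 2 * (7 - x) * (-2 * (k + 1) * (k + 8)) + 2 * (2 * k + 9) ^ 2 * (1 - x ^ 2) * (7 - x)
          + (2 * k + 9) * (1 - 7 * x) * (x - 9) * (14 - (2 * k + 9) * (x - 7))) * hL
      + (-(7 - x) * (14 - (2 * k + 9) * (x - 7)) * (2 * (k + 4) * (k + 5))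
          + 2 * (7 - x) * (2 * (2 * k + 9) * x + (k + 8) * ((2 * k + 9) * x - 1))
          - 2 * (2 * k + 9) * (1 - 7 * x) * (x - 9)) * hR

theorem jacPoly_term_natDegree_le (n s : ℕ) (hs : s ≤ n) (a : ℝ) :
    (C a * (C (1 / 2) * (X - 1)) ^ s * (C (1 / 2) * (X + 1)) ^ (n - s) : ℝ[X]).natDegree ≤ n ∧
    (C a * (C (1 / 2) * (X - 1)) ^ s * (C (1 / 2) * (X + 1)) ^ (n - s) : ℝ[X]).coeff n
      = a * (1 / 2) ^ n := by
  obtain ⟨k, rfl⟩ := Nat.exists_eq_add_of_le hs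
  have h1 : (C (1 / 2) * (X - 1) : ℝ[X]).natDegree ≤ 1 := by compute_degree
  have h2 : (C (1 / 2) * (X + 1) : ℝ[X]).natDegree ≤ 1 := by compute_degree
  have h1' := natDegree_pow_le_of_le s h1
  have h2' := natDegree_pow_le_of_le k h2
  have c1 : ((C (1 / 2) * (X - 1) : ℝ[X]) ^ s).coeff s = (1 / 2) ^ s := by
    have := coeff_pow_of_natDegree_le (m := s) h1
    rw [mul_one] at this
    rw [this]; simp [coeff_one]
  have c2 : ((C (1 / 2) * (X + 1) : ℝ[X]) ^ k).coeff k = (1 / 2) ^ k := by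
    have := coeff_pow_of_natDegree_le (m := k) h2
    rw [mul_one] at this
    rw [this]; simp [coeff_one]
  rw [mul_one] at h1' h2'
  rw [add_tsub_cancel_left, mul_assoc]
  refine ⟨(natDegree_C_mul_le _ _).trans (natDegree_mul_le_of_le h1' h2'), ?_⟩
  rw [coeff_C_mul, coeff_mul_add_eq_of_natDegree_le h1' h2', c1, c2, pow_add]

theorem natDegree_jacPoly_le (n : ℕ) : (jacPoly n).natDegree ≤ n :=
  natDegree_sum_le_of_forall_le _ _ fun s hs =>
    (jacPoly_term_natDegree_le n s (by grind) _).1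

theorem coeff_jacPoly_pos (n : ℕ) : 0 < (jacPoly n).coeff n := by
  rw [jacPoly, finsetSum_coeff]
  refine Finset.sum_pos (fun s hs => ?_) ⟨0, by simp⟩
  have hs' : s ≤ n := by grind
  rw [(jacPoly_term_natDegree_le n s hs' _).2]
  have : 0 < jacCoeff n s :=
    Nat.mul_pos (Nat.choose_pos (by omega)) (Nat.choose_pos (by omega))
  positivity

theorem natDegree_excPoly_le (n : ℕ) : (excPoly n).natDegree ≤ n + 1 := by
  rcases n with _ | n
  · simp only [excPoly]; compute_degree
  · have h1 := natDegree_jacPoly_le n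
    have h2 := natDegree_jacPoly_le (n + 1)
    simp only [excPoly]
    refine (natDegree_sub_le _ _).trans (max_le ?_ ?_) <;>
      refine (natDegree_C_mul_le _ _).trans ?_
    · refine (natDegree_sub_le _ _).trans (max_le ?_ (h1.trans (by omega)))
      exact (natDegree_C_mul_le (7 : ℝ) _).trans (h2.trans (by omega))
    · exact natDegree_mul_le_of_le h2
        (by compute_degree : (X - 7 : ℝ[X]).natDegree ≤ 1)

theorem coeff_excPoly_ne_zero (n : ℕ) : (excPoly n).coeff (n + 1) ≠ 0 := by
  rcases n with _ | n
  · simp only [excPoly, coeff_C_mul, coeff_sub, coeff_X, zero_add]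
    norm_num [coeff_ofNat_succ]
  · have h1 := natDegree_jacPoly_le n
    have h2 := natDegree_jacPoly_le (n + 1)
    have c1 : (jacPoly (n + 1)).coeff (n + 1 + 1) = 0 :=
      coeff_eq_zero_of_natDegree_lt (by omega)
    have c2 : (jacPoly n).coeff (n + 1 + 1) = 0 :=
      coeff_eq_zero_of_natDegree_lt (by omega)
    have c3 : (jacPoly (n + 1) * (X - 7)).coeff (n + 1 + 1) = (jacPoly (n + 1)).coeff (n + 1) := by
      rw [mul_sub, coeff_sub, coeff_mul_X, mul_comm (jacPoly (n + 1)) 7,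
        show (7 : ℝ[X]) = C 7 from rfl, coeff_C_mul, c1]
      ring
    simp only [excPoly, coeff_sub, coeff_C_mul, show (7 : ℝ[X]) = C 7 from rfl] at c3 ⊢
    rw [c1, c2, c3]
    have := coeff_jacPoly_pos (n + 1)
    intro h
    linarith

/-- The weight `(1-x)³(1+x)⁴/(x-7)²`. -/
noncomputable def excW (x : ℝ) : ℝ := (1 - x) ^ 3 * (1 + x) ^ 4 / (x - 7) ^ 2

theorem continuousOn_excW : ContinuousOn excW (Set.Icc (-1) 1) := by
  unfold excW
  refine ContinuousOn.div (by fun_prop) (by fun_prop) fun x hx => ?_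
  have : x - 7 ≠ 0 := by linarith [hx.2]
  positivity

theorem intervalIntegrable_mul_excW (p : ℝ[X]) (τ : Set.Icc (-1 : ℝ) 1) :
    IntervalIntegrable (fun x => p.eval x * excW x) volume (-1) τ := by
  refine ContinuousOn.intervalIntegrable ?_
  rw [Set.uIcc_of_le τ.2.1]
  exact (p.continuous.continuousOn).mul
    (continuousOn_excW.mono (Set.Icc_subset_Icc_right τ.2.2))

/-- Integration of a polynomial over `[-1, τ]` against the exceptional Jacobi weight. -/
noncomputable def excInt (τ : Set.Icc (-1 : ℝ) 1) : ℝ[X] →ₗ[ℝ] ℝ where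
  toFun p := ∫ x in (-1 : ℝ)..τ, p.eval x * excW x
  map_add' p q := by
    rw [← intervalIntegral.integral_add (intervalIntegrable_mul_excW p τ)
      (intervalIntegrable_mul_excW q τ)]
    simp only [eval_add, add_mul]
  map_smul' c p := by
    rw [RingHom.id_apply, smul_eq_mul, ← intervalIntegral.integral_const_mul]
    simp only [eval_smul, smul_eq_mul, mul_assoc]

theorem excInt_apply (τ : Set.Icc (-1 : ℝ) 1) (p : ℝ[X]) :
    excInt τ p = ∫ x in (-1 : ℝ)..τ, p.eval x * excW x := rfl

theorem excInt_C_mul (τ : Set.Icc (-1 : ℝ) 1) (c : ℝ) (p : ℝ[X]) :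
    excInt τ (C c * p) = c * excInt τ p := by
  rw [← smul_eq_C_mul, map_smul, smul_eq_mul]

/-- Lagrange identity for the exceptional Jacobi operator. -/
theorem excInt_lagrange (τ : Set.Icc (-1 : ℝ) 1) {r s g h : ℝ[X]}
    (hr : excOp r = (7 - X) * s) (hg : excOp g = (7 - X) * h) :
    excInt τ (s * g) - excInt τ (r * h) = ((τ : ℝ) ^ 2 - 1) * excW τ *
      ((derivative r).eval (τ : ℝ) * g.eval (τ : ℝ)
        - r.eval (τ : ℝ) * (derivative g).eval (τ : ℝ)) := by
  rw [← map_sub, excInt_apply]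
  have hderiv : ∀ x ∈ Set.uIcc (-1 : ℝ) τ, HasDerivAt
      (fun x => ((x ^ 2 - 1) * ((1 - x) ^ 3 * (1 + x) ^ 4)) / (x - 7) ^ 2 *
        ((derivative r).eval x * g.eval x - r.eval x * (derivative g).eval x))
      ((s * g - r * h).eval x * excW x) x := by
    intro x hx
    rw [Set.uIcc_of_le τ.2.1] at hx
    have hx7 : x - 7 ≠ 0 := by linarith [hx.2, τ.2.2]
    have hid := hasDerivAt_id x
    have hnum := ((hid.pow 2).sub_const 1).mul
      (((hid.const_sub 1).pow 3).mul ((hid.const_add 1).pow 4))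
    have hw := hnum.div ((hid.sub_const 7).pow 2) (pow_ne_zero 2 hx7)
    have hb := (((derivative r).hasDerivAt x).mul (g.hasDerivAt x)).sub
      ((r.hasDerivAt x).mul ((derivative g).hasDerivAt x))
    refine (hw.mul hb).congr_deriv ?_
    have er := congrArg (eval x) hr
    have eg := congrArg (eval x) hg
    simp only [excOp_apply, eval_mul, eval_sub, eval_add, eval_pow, eval_X, eval_one,
      eval_ofNat] at er eg ⊢
    simp only [excW, id, Pi.mul_apply, Pi.pow_apply, Pi.sub_apply, Pi.div_apply]
    generalize eval x (derivative (derivative r)) = r2 at *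
    generalize eval x (derivative r) = r1 at *
    generalize eval x (derivative (derivative g)) = g2 at *
    generalize eval x (derivative g) = g1 at *
    generalize eval x r = r0 at *
    generalize eval x g = g0 at *
    generalize eval x s = s0 at *
    generalize eval x h = h0 at *
    have es : s0 = -((7 - x) * (x ^ 2 - 1) * r2 + (1 - 7 * x) * ((x - 9) * r1 - r0)) / (x - 7) := by
      rw [eq_div_iff hx7]; linear_combination er
    have eh : h0 = -((7 - x) * (x ^ 2 - 1) * g2 + (1 - 7 * x) * ((x - 9) * g1 - g0)) / (x - 7) := by
      rw [eq_div_iff hx7]; linear_combination eg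
    rw [es, eh]
    field_simp
    push_cast
    ring
  have hintegrable : IntervalIntegrable (fun x => (s * g - r * h).eval x * excW x) volume (-1) τ :=
    intervalIntegrable_mul_excW _ τ
  rw [intervalIntegral.integral_eq_sub_of_hasDerivAt hderiv hintegrable]
  simp only [excW]
  ring

/-- The right end point `1` of the interval of orthogonality. -/
def unitRight : Set.Icc (-1 : ℝ) 1 := ⟨1, by norm_num⟩

theorem excInt_mul_self_pos {p : ℝ[X]} (hp : p ≠ 0) : 0 < excInt unitRight (p * p) := by
  rw [excInt_apply]
  refine intervalIntegral.integral_pos (by norm_num [unitRight]) ?_ ?_ ?_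
  · exact ((p * p).continuous.continuousOn).mul continuousOn_excW
  · intro x hx
    have h1 : 0 ≤ 1 - x := by linarith [hx.2, show (unitRight : ℝ) = 1 from rfl]
    have h2 : 0 ≤ 1 + x := by linarith [hx.1]
    rw [eval_mul, excW]
    have := mul_self_nonneg (p.eval x)
    positivity
  · obtain ⟨c, hc, hpc⟩ : ∃ c ∈ Set.Ioo (-1 : ℝ) 1, p.eval c ≠ 0 := by
      by_contra! hcon
      exact hp (eq_zero_of_infinite_isRoot p
        ((Set.Ioo_infinite (by norm_num : (-1 : ℝ) < 1)).mono fun x hx => hcon x hx))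
    refine ⟨c, ⟨hc.1.le, hc.2.le⟩, ?_⟩
    have h1 : 0 < 1 - c := by linarith [hc.2]
    have h2 : 0 < 1 + c := by linarith [hc.1]
    have h3 : c - 7 ≠ 0 := by linarith [hc.2]
    rw [eval_mul, excW]
    have := mul_self_pos.2 hpc
    positivity

theorem excPoly_ne_zero (n : ℕ) : excPoly n ≠ 0 := fun h =>
  coeff_excPoly_ne_zero n (by rw [h, coeff_zero])

theorem normSqJ_eq (n : ℕ) : normSqJ (n + 1) = excInt unitRight (excPoly n * excPoly n) := by
  rw [normSqJ, excInt_apply]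
  refine intervalIntegral.integral_congr fun x _ => ?_
  simp only [eval_mul, eval_excPoly, excW]
  ring

theorem normSqJ_pos (n : ℕ) : 0 < normSqJ (n + 1) := by
  rw [normSqJ_eq]
  exact excInt_mul_self_pos (excPoly_ne_zero n)

/-- The polynomial underlying `pTil (n + 1)`. -/
noncomputable def onPoly (n : ℕ) : ℝ[X] := C (1 / √(normSqJ (n + 1))) * excPoly n

theorem eval_onPoly (n : ℕ) (x : ℝ) : (onPoly n).eval x = pTil (n + 1) x := by
  rw [onPoly, pTil, eval_mul, eval_C, eval_excPoly]
  ring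

theorem excOp_C_mul (c : ℝ) (p : ℝ[X]) : excOp (C c * p) = C c * excOp p := by
  rw [← smul_eq_C_mul, map_smul, smul_eq_C_mul]

theorem excOp_onPoly (n : ℕ) : excOp (onPoly n) = (7 - X) * (C (excEig n) * onPoly n) := by
  rw [onPoly, excOp_C_mul, excOp_excPoly]
  ring

theorem natDegree_onPoly_le (n : ℕ) : (onPoly n).natDegree ≤ n + 1 :=
  (natDegree_C_mul_le _ _).trans (natDegree_excPoly_le n)

theorem coeff_onPoly_ne_zero (n : ℕ) : (onPoly n).coeff (n + 1) ≠ 0 := by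
  rw [onPoly, coeff_C_mul]
  have := Real.sqrt_pos.2 (normSqJ_pos n)
  exact mul_ne_zero (by positivity) (coeff_excPoly_ne_zero n)

theorem excEig_injective : Function.Injective excEig := by
  intro j k h
  have h' : ((j : ℝ) - k) * (j + k + 8) = 0 := by
    simp only [excEig] at h
    linear_combination h
  rcases mul_eq_zero.1 h' with h | h
  · exact_mod_cast sub_eq_zero.1 h
  · exact absurd h (by positivity)

theorem excInt_onPoly_mul (j k : ℕ) :
    excInt unitRight (onPoly j * onPoly k) = if j = k then 1 else 0 := by
  split_ifs with hjk
  · subst hjk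
    have h0 := normSqJ_pos j
    rw [onPoly, show C (1 / √(normSqJ (j + 1))) * excPoly j * (C (1 / √(normSqJ (j + 1))) * excPoly j)
      = C (1 / √(normSqJ (j + 1)) * (1 / √(normSqJ (j + 1)))) * (excPoly j * excPoly j) by
        rw [C_mul]; ring, excInt_C_mul, ← normSqJ_eq]
    have := Real.mul_self_sqrt h0.le
    have := Real.sqrt_pos.2 h0
    field_simp
    linarith
  · have h := excInt_lagrange unitRight (excOp_onPoly j) (excOp_onPoly k)
    rw [mul_assoc, excInt_C_mul, show onPoly j * (C (excEig k) * onPoly k)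
      = C (excEig k) * (onPoly j * onPoly k) by ring, excInt_C_mul, ← sub_mul,
      show ((unitRight : ℝ) ^ 2 - 1) = 0 by norm_num [unitRight], zero_mul, zero_mul] at h
    exact (mul_eq_zero.1 h).resolve_left (sub_ne_zero.2 fun h => hjk (excEig_injective h))

theorem eval_derivative_onPoly_seven (n : ℕ) :
    2 * (derivative (onPoly n)).eval 7 + (onPoly n).eval 7 = 0 := by
  have h := congrArg (eval 7) (excOp_onPoly n)
  simp only [excOp_apply, eval_mul, eval_sub, eval_add, eval_pow, eval_X, eval_one,
    eval_ofNat] at h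
  linear_combination h / 48

theorem exists_eq_sum_onPoly (m : ℕ) (p : ℝ[X]) (hm : p.natDegree ≤ m)
    (h7 : 2 * (derivative p).eval 7 + p.eval 7 = 0) :
    ∃ c : ℕ → ℝ, p = ∑ k ∈ Finset.range m, C (c k) * onPoly k := by
  induction m generalizing p with
  | zero =>
    rw [eq_C_of_natDegree_le_zero hm] at h7 ⊢
    simp only [derivative_C, eval_zero, eval_C, mul_zero, zero_add] at h7
    exact ⟨0, by simp [h7]⟩
  | succ m ih =>
    set a := p.coeff (m + 1) / (onPoly m).coeff (m + 1) with ha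
    obtain ⟨c, hc⟩ := ih (p - C a * onPoly m) (by
      rw [natDegree_le_iff_coeff_eq_zero]
      intro i hi
      rw [coeff_sub, coeff_C_mul]
      rcases Nat.eq_or_lt_of_le (Nat.succ_le_of_lt hi) with rfl | hi'
      · rw [ha, Nat.succ_eq_add_one, div_mul_cancel₀ _ (coeff_onPoly_ne_zero m), sub_self]
      · rw [coeff_eq_zero_of_natDegree_lt (lt_of_le_of_lt hm hi'),
          coeff_eq_zero_of_natDegree_lt (lt_of_le_of_lt (natDegree_onPoly_le m) hi')]
        ring) (by
      have := eval_derivative_onPoly_seven m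
      simp only [derivative_sub, derivative_C_mul, eval_sub, eval_mul, eval_C]
      linear_combination h7 - a * this)
    refine ⟨Function.update c m a, ?_⟩
    rw [Finset.sum_range_succ, Function.update_self, ← sub_eq_iff_eq_add, hc]
    refine Finset.sum_congr rfl fun k hk => ?_
    rw [Function.update_of_ne (by grind)]

/-- Matrix entries of multiplication by `(x-7)²` in the orthonormal basis. -/
noncomputable def bCoef (j k : ℕ) : ℝ :=
  excInt unitRight ((X - 7) ^ 2 * onPoly j * onPoly k)

theorem bCoef_comm (j k : ℕ) : bCoef j k = bCoef k j := by
  rw [bCoef, bCoef, mul_right_comm]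

theorem sq_mul_onPoly (j : ℕ) :
    (∀ k, j + 3 ≤ k → bCoef j k = 0) ∧
    (X - 7) ^ 2 * onPoly j = ∑ k ∈ Finset.range (j + 3), C (bCoef j k) * onPoly k := by
  obtain ⟨c, hc⟩ := exists_eq_sum_onPoly (j + 3) ((X - 7) ^ 2 * onPoly j) (by
      have h1 : ((X - 7) ^ 2 : ℝ[X]).natDegree ≤ 2 := by compute_degree
      exact (natDegree_mul_le_of_le h1 (natDegree_onPoly_le j)).trans (by omega)) (by
      simp only [derivative_mul, derivative_pow, derivative_sub, derivative_X, derivative_ofNat,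
        eval_mul, eval_add, eval_pow, eval_sub, eval_X, eval_ofNat]
      norm_num)
  have hb : ∀ k, bCoef j k = if k ∈ Finset.range (j + 3) then c k else 0 := by
    intro k
    rw [bCoef, hc, Finset.sum_mul, map_sum]
    simp only [mul_assoc, excInt_C_mul, excInt_onPoly_mul, mul_ite, mul_one, mul_zero,
      Finset.sum_ite_eq']
  refine ⟨fun k hk => by rw [hb, if_neg (by grind)], ?_⟩
  rw [hc]
  exact Finset.sum_congr rfl fun k hk => by rw [hb, if_pos hk]

theorem sq_mul_onPoly_eq_sum {j K : ℕ} (hK : j + 3 ≤ K) :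
    (X - 7) ^ 2 * onPoly j = ∑ k ∈ Finset.range K, C (bCoef j k) * onPoly k := by
  rw [(sq_mul_onPoly j).2]
  refine Finset.sum_subset (by grind) fun k _ hk => ?_
  rw [(sq_mul_onPoly j).1 k (by grind), C_0, zero_mul]

theorem bCoef_add_two_ne_zero (j : ℕ) : bCoef j (j + 2) ≠ 0 := by
  intro h0
  have h := congrArg (fun p => coeff p (j + 3)) (sq_mul_onPoly j).2
  simp only [Finset.sum_range_succ _ (j + 2), h0, C_0, zero_mul, add_zero, finsetSum_coeff,
    coeff_C_mul] at h
  rw [Finset.sum_eq_zero fun k hk => by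
    rw [coeff_eq_zero_of_natDegree_lt (lt_of_le_of_lt (natDegree_onPoly_le k) (by grind)),
      mul_zero]] at h
  have h1 : ((X - 7) ^ 2 : ℝ[X]).natDegree ≤ 2 := by compute_degree
  rw [show j + 3 = 2 + (j + 1) by ring,
    coeff_mul_add_eq_of_natDegree_le h1 (natDegree_onPoly_le j)] at h
  have h2 : ((X - 7) ^ 2 : ℝ[X]).coeff 2 = 1 := by
    have := ((monic_X_sub_C (7 : ℝ)).pow 2).coeff_natDegree
    rwa [natDegree_pow, natDegree_X_sub_C] at this
  rw [h2, one_mul] at h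
  exact coeff_onPoly_ne_zero j h

theorem seven_sub_X_ne_zero : (7 - X : ℝ[X]) ≠ 0 := by
  intro h
  have := congrArg (eval (0 : ℝ)) h
  norm_num at this

/-- The first image of `(X - 7)² y` under `(7 - X)⁻¹ excOp`, for an eigenfunction `y`. -/
theorem excOp_sq_mul_eq {y G : ℝ[X]} {l : ℝ} (hy : excOp y = (7 - X) * (C l * y))
    (hG : excOp ((X - 7) ^ 2 * y) = (7 - X) * G) :
    G = C l * ((X - 7) ^ 2 * y) + 4 * (X ^ 2 - 1) * (X - 7) * derivative y
      + (2 * (X ^ 2 - 1) - 2 * (1 - 7 * X) * (X - 9)) * y := by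
  apply mul_left_cancel₀ seven_sub_X_ne_zero
  rw [← hG]
  rw [excOp_apply] at hy ⊢
  simp only [pow_two (X - 7 : ℝ[X]), derivative_mul, derivative_add, derivative_sub, derivative_X,
    derivative_ofNat, derivative_zero, derivative_one]
  linear_combination (X - 7) ^ 2 * hy

/-- The values at `1/3` of the second to fourth derivative of an eigenfunction. -/
theorem eigen_jet {y : ℝ[X]} {l : ℝ} (hy : excOp y = (7 - X) * (C l * y)) :
    let y0 := y.eval (1 / 3)
    let y1 := (derivative y).eval (1 / 3)
    (derivative (derivative y)).eval (1 / 3) = 39 / 20 * y1 + 9 / 40 * y0 - 9 / 8 * l * y0 ∧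
    (derivative (derivative (derivative y))).eval (1 / 3) =
      3159 / 200 * y1 + 729 / 400 * y0 - 9 / 8 * l * y1 - 243 / 80 * l * y0 ∧
    (derivative (derivative (derivative (derivative y)))).eval (1 / 3) =
      41067 / 400 * y1 + 9477 / 800 * y0 - 243 / 40 * l * y1 - 2349 / 64 * l * y0
        + 81 / 64 * l ^ 2 * y0 := by
  intro y0 y1
  rw [excOp_apply] at hy
  have e0 := congrArg (eval (1 / 3)) hy
  have e1 := congrArg (fun p => (derivative p).eval (1 / 3)) hy
  have e2 := congrArg (fun p => (derivative (derivative p)).eval (1 / 3)) hy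
  simp only [derivative_mul, derivative_add, derivative_sub, derivative_X, derivative_ofNat,
    derivative_X_sq, derivative_C, derivative_one, derivative_zero, eval_add, eval_mul, eval_sub,
    eval_X, eval_C, eval_pow, eval_ofNat, eval_one, eval_zero] at e0 e1 e2
  have h2 : (derivative (derivative y)).eval (1 / 3)
      = 39 / 20 * y1 + 9 / 40 * y0 - 9 / 8 * l * y0 := by
    linear_combination (-27 / 160) * e0
  rw [h2] at e1 e2
  have h3 : (derivative (derivative (derivative y))).eval (1 / 3) =
      3159 / 200 * y1 + 729 / 400 * y0 - 9 / 8 * l * y1 - 243 / 80 * l * y0 := by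
    linear_combination (-27 / 160) * e1
  rw [h3] at e2
  exact ⟨h2, h3, by linear_combination (-27 / 160) * e2⟩

/-- The values and slopes at `1/3` of the iterated images of `(X - 7)² y`. -/
theorem sq_mul_eigen_jet {y G0 G1 G2 : ℝ[X]} {l : ℝ} (hy : excOp y = (7 - X) * (C l * y))
    (h0 : G0 = (X - 7) ^ 2 * y) (h1 : excOp G0 = (7 - X) * G1) (h2 : excOp G1 = (7 - X) * G2) :
    let y0 := y.eval (1 / 3)
    let y1 := (derivative y).eval (1 / 3)
    (G0.eval (1 / 3) = 400 / 9 * y0 ∧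
      (derivative G0).eval (1 / 3) = 400 / 9 * y1 - 40 / 3 * y0) ∧
    (G1.eval (1 / 3) = 640 / 27 * y1 - 224 / 9 * y0 + 400 / 9 * l * y0 ∧
      (derivative G1).eval (1 / 3) = -112 * y0 + 400 / 9 * l * y1 - 40 * l * y0) ∧
    (G2.eval (1 / 3) = 1088 / 27 * y1 - 2272 / 9 * y0 + 1280 / 27 * l * y1 - 224 / 3 * l * y0
        + 400 / 9 * l ^ 2 * y0 ∧
      (derivative G2).eval (1 / 3) = -3488 / 15 * y1 - 4688 / 5 * y0 - 224 / 9 * l * y1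
        - 944 / 3 * l * y0 + 400 / 9 * l ^ 2 * y1 - 200 / 3 * l ^ 2 * y0) := by
  intro y0 y1
  obtain ⟨d2, d3, d4⟩ := eigen_jet hy
  subst h0
  have hG := excOp_sq_mul_eq hy h1
  rw [excOp_apply] at h2
  have e0 := congrArg (eval (1 / 3)) h2
  have e1 := congrArg (fun p => (derivative p).eval (1 / 3)) h2
  have a0 : G1.eval (1 / 3) = _ := congrArg (eval (1 / 3)) hG
  have a1 : (derivative G1).eval (1 / 3) = _ :=
    congrArg (fun p => (derivative p).eval (1 / 3)) hG
  have a2 : (derivative (derivative G1)).eval (1 / 3) = _ :=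
    congrArg (fun p => (derivative (derivative p)).eval (1 / 3)) hG
  have a3 : (derivative (derivative (derivative G1))).eval (1 / 3) = _ :=
    congrArg (fun p => (derivative (derivative (derivative p))).eval (1 / 3)) hG
  simp only [derivative_mul, derivative_add, derivative_sub, derivative_X, derivative_ofNat,
    derivative_X_sq, derivative_C, derivative_one, derivative_zero,
    eval_add, eval_mul, eval_sub, eval_X, eval_C, eval_pow, eval_ofNat, eval_one, eval_zero,
    pow_two (X - 7 : ℝ[X]), d2, d3, d4] at e0 e1 a0 a1 a2 a3 ⊢
  have g2 : G2.eval (1 / 3) = 1088 / 27 * y1 - 2272 / 9 * y0 + 1280 / 27 * l * y1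
      - 224 / 3 * l * y0 + 400 / 9 * l ^ 2 * y0 := by
    rw [a0, a1, a2] at e0
    linear_combination (-3 / 20) * e0
  rw [a0, a1, a2, a3, g2] at e1
  exact ⟨⟨by ring, by ring⟩, ⟨by rw [a0]; ring, by rw [a1]; ring⟩, g2,
    by linear_combination (-3 / 20) * e1⟩

/-- The point `1/3` as an element of `[-1, 1]`. -/
noncomputable def oneThird : Set.Icc (-1 : ℝ) 1 := ⟨1 / 3, by norm_num, by norm_num⟩

/-- The image of an eigenfunction `y` with eigenvalue `l` under the commuting operator, in terms
of the iterated images `G₀, G₁, G₂, G₃` of `(X - 7)² y`. -/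
noncomputable def commImage (g2 g3 g4 g5 g6 g7 g8 l : ℝ) (y G0 G1 G2 G3 : ℝ[X]) : ℝ[X] :=
  C (g2 * l + g4 * l ^ 2) * y + C g3 * G0 + C g5 * (C l * G0 + G1) + C g6 * (C (l ^ 2) * G0 + G2)
    + C (g7 * l) * G1 + C g8 * (C (l ^ 3) * G0 + G3 - C (l ^ 2) * G1 - C l * G2)

theorem excInt_commImage_mul (τ : Set.Icc (-1 : ℝ) 1) (g2 g3 g4 g5 g6 g7 g8 l : ℝ)
    (y G0 G1 G2 G3 z : ℝ[X]) :
    excInt τ (commImage g2 g3 g4 g5 g6 g7 g8 l y G0 G1 G2 G3 * z) =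
      (g2 * l + g4 * l ^ 2) * excInt τ (y * z) + g3 * excInt τ (G0 * z)
      + g5 * (l * excInt τ (G0 * z) + excInt τ (G1 * z))
      + g6 * (l ^ 2 * excInt τ (G0 * z) + excInt τ (G2 * z)) + g7 * l * excInt τ (G1 * z)
      + g8 * (l ^ 3 * excInt τ (G0 * z) + excInt τ (G3 * z) - l ^ 2 * excInt τ (G1 * z)
        - l * excInt τ (G2 * z)) := by
  have : commImage g2 g3 g4 g5 g6 g7 g8 l y G0 G1 G2 G3 * z =
      C (g2 * l + g4 * l ^ 2) * (y * z) + C g3 * (G0 * z)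
      + C g5 * (C l * (G0 * z) + G1 * z) + C g6 * (C (l ^ 2) * (G0 * z) + G2 * z)
      + C (g7 * l) * (G1 * z) + C g8 * (C (l ^ 3) * (G0 * z) + G3 * z - C (l ^ 2) * (G1 * z)
        - C l * (G2 * z)) := by
    rw [commImage]; ring
  rw [this]
  generalize g2 * l + g4 * l ^ 2 = q
  simp only [map_add, map_sub, excInt_C_mul]

theorem excInt_eigen_sub {y G H : ℝ[X]} {m : ℝ} (hy : excOp y = (7 - X) * (C m * y))
    (hG : excOp G = (7 - X) * H) (τ : Set.Icc (-1 : ℝ) 1) :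
    excInt τ (H * y) - m * excInt τ (G * y) = ((τ : ℝ) ^ 2 - 1) * excW τ *
      ((derivative G).eval (τ : ℝ) * y.eval (τ : ℝ)
        - G.eval (τ : ℝ) * (derivative y).eval (τ : ℝ)) := by
  rw [← excInt_lagrange τ hG hy, ← excInt_C_mul, mul_left_comm]

theorem excInt_commImage_symm {y z G0 G1 G2 G3 H0 H1 H2 H3 : ℝ[X]} {l m : ℝ}
    (hy : excOp y = (7 - X) * (C l * y)) (hz : excOp z = (7 - X) * (C m * z))
    (hG0 : G0 = (X - 7) ^ 2 * y) (hH0 : H0 = (X - 7) ^ 2 * z)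
    (hG1 : excOp G0 = (7 - X) * G1) (hH1 : excOp H0 = (7 - X) * H1)
    (hG2 : excOp G1 = (7 - X) * G2) (hH2 : excOp H1 = (7 - X) * H2)
    (hG3 : excOp G2 = (7 - X) * G3) (hH3 : excOp H2 = (7 - X) * H3)
    {g2 : ℝ} (g3 g5 g6 : ℝ) (hg2 : 9 * g2 = -800 * g5 + 224 * g6 - 21824) :
    excInt oneThird (commImage g2 g3 (-1760) g5 g6 (34 - 2 * g6) (-5) l y G0 G1 G2 G3 * z) =
      excInt oneThird (commImage g2 g3 (-1760) g5 g6 (34 - 2 * g6) (-5) m z H0 H1 H2 H3 * y) := by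
  have hv : ((oneThird : Set.Icc (-1 : ℝ) 1) : ℝ) = 1 / 3 := rfl
  obtain ⟨⟨a0, a0'⟩, ⟨a1, a1'⟩, a2, a2'⟩ := sq_mul_eigen_jet hy hG0 hG1 hG2
  obtain ⟨⟨b0, b0'⟩, ⟨b1, b1'⟩, b2, b2'⟩ := sq_mul_eigen_jet hz hH0 hH1 hH2
  have k := excInt_eigen_sub hz hy oneThird
  have s0 := excInt_eigen_sub hz hG1 oneThird
  have s1 := excInt_eigen_sub hz hG2 oneThird
  have s2 := excInt_eigen_sub hz hG3 oneThird
  have t0 := excInt_eigen_sub hy hH1 oneThird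
  have t1 := excInt_eigen_sub hy hH2 oneThird
  have t2 := excInt_eigen_sub hy hH3 oneThird
  have c0 : excInt oneThird (H0 * y) = excInt oneThird (G0 * z) := by
    rw [hG0, hH0]; congr 1; ring
  have c1 : excInt oneThird (z * y) = excInt oneThird (y * z) := by rw [mul_comm]
  rw [mul_assoc, excInt_C_mul] at k
  rw [hv] at *
  simp only [a0, a0', a1, a1', a2, a2'] at s0 s1 s2
  simp only [b0, b0', b1, b1', b2, b2'] at t0 t1 t2
  rw [excInt_commImage_mul, excInt_commImage_mul, c1]
  rw [c0] at t0 ⊢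
  obtain rfl : g2 = (-800 * g5 + 224 * g6 - 21824) / 9 := by linarith
  generalize (((1 / 3 : ℝ)) ^ 2 - 1) * excW (1 / 3) = κ at *
  linear_combination ((-800 * g5 + 224 * g6 - 21824) / 9 - 1760 * (l + m)) * k
    - 5 * s2 + 5 * t2 + (g6 + 5 * l - 5 * m) * s1 - (g6 + 5 * m - 5 * l) * t1
    + (g5 + (34 - 2 * g6) * l + 5 * l ^ 2 + m * (g6 + 5 * l - 5 * m)) * s0
    - (g5 + (34 - 2 * g6) * m + 5 * m ^ 2 + l * (g6 + 5 * m - 5 * l)) * t0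

/-- The factor by which the commuting matrix multiplies the `(j, k)` entry of the multiplication
matrix, in terms of the eigenvalues `l`, `m` attached to `j`, `k`. -/
noncomputable def commFactor (g3 g5 g6 l m : ℝ) : ℝ :=
  g3 + g5 * (l + m) + g6 * (l ^ 2 + m ^ 2) + (34 - 2 * g6) * (l * m)
    - 5 * (l ^ 3 + m ^ 3 - l * m ^ 2 - l ^ 2 * m)

theorem commFactor_comm (g3 g5 g6 l m : ℝ) :
    commFactor g3 g5 g6 l m = commFactor g3 g5 g6 m l := by
  simp only [commFactor]; ring

theorem exists_commFactor_eq_zero (n : ℕ) (hn : 5 ≤ n) : ∃ g3 g5 g6 : ℝ,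
    commFactor g3 g5 g6 (excEig n) (excEig (n + 2)) = 0 ∧
    commFactor g3 g5 g6 (excEig (n + 1)) (excEig (n + 2)) = 0 ∧
    commFactor g3 g5 g6 (excEig (n + 1)) (excEig (n + 3)) = 0 ∧
    commFactor g3 g5 g6 (excEig 0) (excEig 2) ≠ 0 := by
  have hn' : (5 : ℝ) ≤ n := by exact_mod_cast hn
  set t : ℝ := n + 5 with ht
  have hv : 3 / 2 * ((t + 1 / 2) ^ 2 - 1) ≠ 0 := by
    have : 100 ≤ (t + 1 / 2) ^ 2 := by nlinarith
    exact ne_of_gt (by linarith)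
  obtain ⟨g5, h5⟩ : ∃ g5 : ℝ, g5 * (3 / 2 * ((t + 1 / 2) ^ 2 - 1)) =
      7650 + 126 * (t ^ 2 * (t + 1) ^ 2)
      - (t + 1 / 2) ^ 2 * (126 * (t ^ 2 + (t + 1) ^ 2) - 1244) / 4
      - 34 * ((2 * (t + 1 / 2) ^ 2 - 63 / 2) ^ 2 - 4 * (t + 1 / 2) ^ 2) / 4
      + 20 * (t + 1 / 2) ^ 2 * (2 * (t + 1 / 2) ^ 2 - 63 / 2) := ⟨_, div_mul_cancel₀ _ hv⟩
  have key (u : ℝ) : commFactor (30 * g5 - 7650 - 126 * (t ^ 2 * (t + 1) ^ 2)) g5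
      ((126 * (t ^ 2 + (t + 1) ^ 2) - 2 * g5 - 1244) / 16) ((u - 1) ^ 2 - 16) ((u + 1) ^ 2 - 16)
      = -126 * (u ^ 2 - t ^ 2) * (u ^ 2 - (t + 1) ^ 2) := by
    simp only [commFactor]; ring
  have e0 : excEig n = (t - 1) ^ 2 - 16 := by rw [excEig, ht]; ring
  have e1 : excEig (n + 1) = t ^ 2 - 16 := by rw [excEig, ht]; push_cast; ring
  have e2 : excEig (n + 2) = (t + 1) ^ 2 - 16 := by rw [excEig, ht]; push_cast; ring
  have e3 : excEig (n + 3) = (t + 1 + 1) ^ 2 - 16 := by rw [excEig, ht]; push_cast; ring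
  refine ⟨30 * g5 - 7650 - 126 * (t ^ 2 * (t + 1) ^ 2), g5,
    (126 * (t ^ 2 + (t + 1) ^ 2) - 2 * g5 - 1244) / 16, ?_, ?_, ?_, ?_⟩
  · rw [e0, e2, key]; ring
  · rw [e1, e2]
    simp only [commFactor]
    linear_combination h5
  · have := key (t + 1)
    rw [add_sub_cancel_right] at this
    rw [e1, e3, this]; ring
  · have := key 5
    norm_num at this
    norm_num [excEig, this]
    constructor <;> nlinarith

theorem MMat_apply (N : ℕ) (j k : Fin N) : MMat N j k = excInt oneThird (onPoly j * onPoly k) := by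
  rw [excInt_apply, MMat]
  refine intervalIntegral.integral_congr fun x _ => ?_
  simp only [eval_mul, eval_onPoly, excW]
  ring

theorem BMat_apply (N : ℕ) (j k : Fin N) : BMat N j k = bCoef j k := by
  rw [bCoef, excInt_apply, BMat]
  refine intervalIntegral.integral_congr fun x _ => ?_
  simp only [eval_mul, eval_pow, eval_sub, eval_X, eval_ofNat, eval_onPoly, excW]
  ring

theorem LamMat_eq (N : ℕ) : LamMat N = Matrix.diagonal fun i : Fin N => excEig i := by
  rw [LamMat]
  congr 1
  funext i
  rw [excEig]
  ring

/-- The linear combination of words in the two matrices considered in the main theorem. -/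
noncomputable def perlineMat (N : ℕ) (g1 g2 g3 g4 g5 g6 g7 g8 : ℝ) : Matrix (Fin N) (Fin N) ℝ :=
  g1 • (1 : Matrix (Fin N) (Fin N) ℝ) + g2 • LamMat N + g3 • BMat N
    + g4 • LamMat N ^ 2
    + g5 • (LamMat N * BMat N + BMat N * LamMat N)
    + g6 • (BMat N * LamMat N ^ 2 + LamMat N ^ 2 * BMat N)
    + g7 • (LamMat N * BMat N * LamMat N)
    + g8 • ((LamMat N ^ 3 * BMat N + BMat N * LamMat N ^ 3)
        - (LamMat N * BMat N * LamMat N ^ 2 + LamMat N ^ 2 * BMat N * LamMat N))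

theorem perlineMat_apply (N : ℕ) (g2 g3 g4 g5 g6 : ℝ) (j k : Fin N) :
    perlineMat N 0 g2 g3 g4 g5 g6 (34 - 2 * g6) (-5) j k =
      (if j = k then g2 * excEig j + g4 * excEig j ^ 2 else 0)
        + bCoef j k * commFactor g3 g5 g6 (excEig j) (excEig k) := by
  simp only [perlineMat, LamMat_eq, Matrix.diagonal_pow, Matrix.add_apply, Matrix.sub_apply,
    Matrix.smul_apply, Matrix.diagonal_mul, Matrix.mul_diagonal, BMat_apply, Matrix.diagonal_apply,
    Pi.pow_apply, smul_eq_mul, commFactor, zero_mul, zero_add]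
  split_ifs <;> ring

theorem perlineMat_apply_comm (N : ℕ) (g2 g3 g4 g5 g6 : ℝ) (j k : Fin N) :
    perlineMat N 0 g2 g3 g4 g5 g6 (34 - 2 * g6) (-5) j k =
      perlineMat N 0 g2 g3 g4 g5 g6 (34 - 2 * g6) (-5) k j := by
  rw [perlineMat_apply, perlineMat_apply, bCoef_comm, commFactor_comm]
  by_cases h : j = k
  · rw [h]
  · rw [if_neg h, if_neg (Ne.symm h)]

/-- The expansion of the `r`-th iterated image of `(X - 7)² * onPoly j`. -/
noncomputable def iterPoly (N j r : ℕ) : ℝ[X] :=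
  ∑ k ∈ Finset.range (N + 2), C (bCoef j k * excEig k ^ r) * onPoly k

theorem iterPoly_zero {N j : ℕ} (hj : j < N) : iterPoly N j 0 = (X - 7) ^ 2 * onPoly j := by
  rw [sq_mul_onPoly_eq_sum (K := N + 2) (by omega), iterPoly]
  simp

theorem excOp_iterPoly (N j r : ℕ) : excOp (iterPoly N j r) = (7 - X) * iterPoly N j (r + 1) := by
  rw [iterPoly, iterPoly, map_sum, Finset.mul_sum]
  refine Finset.sum_congr rfl fun k _ => ?_
  rw [excOp_C_mul, excOp_onPoly, pow_succ, ← mul_assoc (bCoef j k), C_mul (b := excEig k)]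
  ring

theorem sum_perlineMat_mul_onPoly {N : ℕ} (g2 g3 g4 g5 g6 : ℝ)
    (h : ∀ j k, j < N → N ≤ k → k < j + 3 →
      commFactor g3 g5 g6 (excEig j) (excEig k) = 0) (j : Fin N) :
    ∑ k : Fin N, C (perlineMat N 0 g2 g3 g4 g5 g6 (34 - 2 * g6) (-5) j k) * onPoly k =
      commImage g2 g3 g4 g5 g6 (34 - 2 * g6) (-5) (excEig j) (onPoly j)
        (iterPoly N j 0) (iterPoly N j 1) (iterPoly N j 2) (iterPoly N j 3) := by
  have hB : ∑ k : Fin N, C (bCoef j k * commFactor g3 g5 g6 (excEig j) (excEig k)) * onPoly k =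
      ∑ k ∈ Finset.range (N + 2),
        C (bCoef j k * commFactor g3 g5 g6 (excEig j) (excEig k)) * onPoly k := by
    rw [Fin.sum_univ_eq_sum_range
      (fun k => C (bCoef j k * commFactor g3 g5 g6 (excEig j) (excEig k)) * onPoly k)]
    refine Finset.sum_subset (Finset.range_mono (by omega)) fun k _ hk => ?_
    rw [Finset.mem_range, not_lt] at hk
    rcases lt_or_ge k ((j : ℕ) + 3) with hlt | hge
    · rw [h j k j.2 hk hlt]; simp
    · rw [(sq_mul_onPoly j).1 k hge]; simp
  simp only [perlineMat_apply, C_add, add_mul, Finset.sum_add_distrib]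
  rw [hB, Finset.sum_eq_single j (by simp +contextual [eq_comm]) (by simp), if_pos rfl,
    commImage]
  simp only [add_assoc]
  congr 1
  simp only [iterPoly, Finset.mul_sum, ← Finset.sum_add_distrib, ← Finset.sum_sub_distrib]
  refine Finset.sum_congr rfl fun k _ => ?_
  simp only [commFactor, C_add, C_sub, C_mul, C_pow, C_neg, C_ofNat]
  ring

theorem perlineMat_mul_MMat {N : ℕ} {g2 g3 g5 g6 : ℝ}
    (h : ∀ j k, j < N → N ≤ k → k < j + 3 →
      commFactor g3 g5 g6 (excEig j) (excEig k) = 0)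
    (hg2 : 9 * g2 = -800 * g5 + 224 * g6 - 21824) :
    perlineMat N 0 g2 g3 (-1760) g5 g6 (34 - 2 * g6) (-5) * MMat N =
      MMat N * perlineMat N 0 g2 g3 (-1760) g5 g6 (34 - 2 * g6) (-5) := by
  have key (j i : Fin N) :
      ∑ k, perlineMat N 0 g2 g3 (-1760) g5 g6 (34 - 2 * g6) (-5) j k * MMat N k i =
      excInt oneThird (commImage g2 g3 (-1760) g5 g6 (34 - 2 * g6) (-5) (excEig j) (onPoly j)
        (iterPoly N j 0) (iterPoly N j 1) (iterPoly N j 2) (iterPoly N j 3) * onPoly i) := by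
    rw [← sum_perlineMat_mul_onPoly _ _ _ _ _ h, Finset.sum_mul, map_sum]
    refine Finset.sum_congr rfl fun k _ => ?_
    rw [mul_assoc, excInt_C_mul, MMat_apply]
  ext j i
  rw [Matrix.mul_apply, Matrix.mul_apply, key]
  have hR : ∑ k, MMat N j k * perlineMat N 0 g2 g3 (-1760) g5 g6 (34 - 2 * g6) (-5) k i =
      ∑ k, perlineMat N 0 g2 g3 (-1760) g5 g6 (34 - 2 * g6) (-5) i k * MMat N k j := by
    refine Finset.sum_congr rfl fun k _ => ?_
    rw [perlineMat_apply_comm, mul_comm, MMat_apply, MMat_apply, mul_comm (onPoly _)]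
  rw [hR, key]
  exact excInt_commImage_symm (excOp_onPoly j) (excOp_onPoly i) (iterPoly_zero j.2)
    (iterPoly_zero i.2) (excOp_iterPoly _ _ _) (excOp_iterPoly _ _ _) (excOp_iterPoly _ _ _)
    (excOp_iterPoly _ _ _) (excOp_iterPoly _ _ _) (excOp_iterPoly _ _ _) g3 g5 g6 hg2

theorem exists_perlineMat_commute (N : ℕ) (hN : 7 ≤ N) :
    ∃ g1 g2 g3 g4 g5 g6 g7 g8 : ℝ,
      ¬(g1 = 0 ∧ g2 = 0 ∧ g3 = 0 ∧ g4 = 0 ∧ g5 = 0 ∧ g6 = 0 ∧ g7 = 0 ∧ g8 = 0) ∧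
      (∀ c : ℝ, perlineMat N g1 g2 g3 g4 g5 g6 g7 g8 ≠ c • (1 : Matrix (Fin N) (Fin N) ℝ)) ∧
      perlineMat N g1 g2 g3 g4 g5 g6 g7 g8 * MMat N =
        MMat N * perlineMat N g1 g2 g3 g4 g5 g6 g7 g8 := by
  obtain ⟨n, rfl⟩ : ∃ n, N = n + 2 := ⟨N - 2, by omega⟩
  obtain ⟨g3, g5, g6, h02, h12, h13, hne⟩ := exists_commFactor_eq_zero n (by omega)
  refine ⟨0, (-800 * g5 + 224 * g6 - 21824) / 9, g3, -1760, g5, g6, 34 - 2 * g6, -5,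
    by norm_num, fun c hc => ?_, perlineMat_mul_MMat (fun j k hj hk hkj => ?_) (by ring)⟩
  · have := congrFun (congrFun hc ⟨0, by omega⟩) ⟨2, by omega⟩
    rw [perlineMat_apply] at this
    simp [hne, bCoef_add_two_ne_zero 0] at this
  · obtain ⟨rfl, rfl⟩ | ⟨rfl, rfl⟩ | ⟨rfl, rfl⟩ : (j = n ∧ k = n + 2) ∨
      (j = n + 1 ∧ k = n + 2) ∨ (j = n + 1 ∧ k = n + 3) := by omega
    · exact h02
    · exact h12
    · exact h13

end

theorem jacobi_perline_general (N : ℕ) (hN : 7 ≤ N) :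
    ∃ γ1 γ2 γ3 γ4 γ5 γ6 γ7 γ8 : ℝ,
      ¬(γ1 = 0 ∧ γ2 = 0 ∧ γ3 = 0 ∧ γ4 = 0 ∧ γ5 = 0 ∧ γ6 = 0 ∧ γ7 = 0 ∧ γ8 = 0) ∧
      (∀ c : ℝ,
        γ1 • (1 : Matrix (Fin N) (Fin N) ℝ) + γ2 • LamMat N + γ3 • BMat N
            + γ4 • LamMat N ^ 2
            + γ5 • (LamMat N * BMat N + BMat N * LamMat N)
            + γ6 • (BMat N * LamMat N ^ 2 + LamMat N ^ 2 * BMat N)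
            + γ7 • (LamMat N * BMat N * LamMat N)
            + γ8 • ((LamMat N ^ 3 * BMat N + BMat N * LamMat N ^ 3)
                - (LamMat N * BMat N * LamMat N ^ 2 + LamMat N ^ 2 * BMat N * LamMat N))
          ≠ c • (1 : Matrix (Fin N) (Fin N) ℝ)) ∧
      (γ1 • (1 : Matrix (Fin N) (Fin N) ℝ) + γ2 • LamMat N + γ3 • BMat N
            + γ4 • LamMat N ^ 2
            + γ5 • (LamMat N * BMat N + BMat N * LamMat N)
            + γ6 • (BMat N * LamMat N ^ 2 + LamMat N ^ 2 * BMat N)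
            + γ7 • (LamMat N * BMat N * LamMat N)
            + γ8 • ((LamMat N ^ 3 * BMat N + BMat N * LamMat N ^ 3)
                - (LamMat N * BMat N * LamMat N ^ 2 + LamMat N ^ 2 * BMat N * LamMat N)))
          * MMat N
        = MMat N *
          (γ1 • (1 : Matrix (Fin N) (Fin N) ℝ) + γ2 • LamMat N + γ3 • BMat N
            + γ4 • LamMat N ^ 2
            + γ5 • (LamMat N * BMat N + BMat N * LamMat N)
            + γ6 • (BMat N * LamMat N ^ 2 + LamMat N ^ 2 * BMat N)
            + γ7 • (LamMat N * BMat N * LamMat N)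
            + γ8 • ((LamMat N ^ 3 * BMat N + BMat N * LamMat N ^ 3)
                - (LamMat N * BMat N * LamMat N ^ 2 + LamMat N ^ 2 * BMat N * LamMat N))) := by
  exact exists_perlineMat_commute N hN
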